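/- Let A be a C*-algebra and (φ_m) a bounded sequence in A' spanning ℓ¹ almost isometrically. Then for every ε > 0 there exist a subsequence (φ_{m_n}), pairwise orthogonal positive normalized elements (a_n) in A, and pairwise orthogonal positive normalized elements (b_n) in A, such that ‖φ_{m_n} − b_n·φ_{m_n}·a_n‖ < ε for all n ∈ ℕ, where (b·φ·a)(x) = φ(axb). -/

import Mathlib

open Filter Topology

/-- A sequence of nonzero functionals spans `ℓ¹` almost isometrically. -/
def SpansL1AlmostIsometrically {X : Type*} [NormedAddCommGroup X] [NormedSpace ℂ X]
    (x : ℕ → X) : Prop :=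
  ∃ δ : ℕ → ℝ, (∀ m, δ m ∈ Set.Ico (0 : ℝ) 1) ∧ Tendsto δ atTop (nhds 0) ∧
    ∀ (m : ℕ) (α : ℕ → ℂ), Summable (fun n => ‖α n‖) →
      (1 - δ m) * ∑' n, ‖α (n + m)‖ ≤
          ‖∑' n, α (n + m) • (‖x (n + m)‖⁻¹ • x (n + m))‖ ∧
        ‖∑' n, α (n + m) • (‖x (n + m)‖⁻¹ • x (n + m))‖ ≤ ∑' n, ‖α (n + m)‖

/-- `(b · φ · a) x = φ (a * x * b)`. -/
noncomputable def twoSidedFunctional {A : Type*} [NonUnitalCStarAlgebra A]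
    (φ : A →L[ℂ] ℂ) (a b : A) : A →L[ℂ] ℂ :=
  φ.comp ((((ContinuousLinearMap.mul ℂ A).flip b).comp (ContinuousLinearMap.mul ℂ A a)))

/-!
Suppose a functional `ψ` of norm one is almost normed by a contraction `u`, and let `h = u u⋆`. Then
`ψ` is almost normed by `a u` too, where `a` is the normalized spectral cutoff of `h` to the part of
its spectrum above `1 / 2`, and a perturbation argument shows that `ψ` is close to `ψ(a ·)`. With
`u⋆ u` and the conjugate of `ψ` one gets `b` on the right. To make the successive `a` and
`b` orthogonal, all later vectors `u` are taken in the range of the compression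
`x ↦ (1 - g) x (1 - p)`, where the plateau elements `g` and `p` act as identities on `a` and `b`.
Since `g` and `p` are multiples of `u u⋆` and `u⋆ u`, the compression hardly moves those functionals
which are small on `u u⋆ A` and on `A u⋆ u`.

It remains to choose `u` so that infinitely many of the normalized `φ n` are small in this sense.
Since the span is almost isometric to `ℓ¹`, for any unimodular `w 1, …, w N` a single vector almost
norms `w i • φ i` for all `i ≤ N` at once, provided the `φ i` come late in the sequence. Fourier
averages of such vectors norm the individual `φ i`, but they also form both a row contraction and a
column contraction. By Bessel's inequality every functional is then small on at least one of the
`N` averages, and by the pigeonhole principle one of them works for infinitely many functionals.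
-/

section CStarInequalities

variable {A : Type*} [NonUnitalCStarAlgebra A]

lemma norm_mul_star_self_le_one {u : A} (hu : ‖u‖ ≤ 1) : ‖u * star u‖ ≤ 1 := by
  rw [CStarRing.norm_self_mul_star]
  exact mul_le_one₀ hu (norm_nonneg _) hu

variable [PartialOrder A] [StarOrderedRing A]

lemma quasispectrum_subset_Icc_zero_one {a : A} (ha : 0 ≤ a) (ha1 : ‖a‖ ≤ 1) :
    quasispectrum ℝ a ⊆ Set.Icc 0 1 := fun r hr ↦
  ⟨quasispectrum_nonneg_of_nonneg a ha r hr, (Real.le_norm_self r).trans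
    ((NonUnitalIsometricContinuousFunctionalCalculus.norm_quasispectrum_le a hr).trans ha1)⟩

lemma mul_self_le_self_of_norm_le_one {a : A} (ha : 0 ≤ a) (ha1 : ‖a‖ ≤ 1) : a * a ≤ a := by
  rw [← sub_nonneg, ← cfcₙ_id' ℝ a, ← cfcₙ_mul .., ← cfcₙ_sub ..]
  refine cfcₙ_nonneg fun r hr ↦ ?_
  obtain ⟨hr0, hr1⟩ := quasispectrum_subset_Icc_zero_one ha ha1 hr
  nlinarith

lemma norm_mul_add_sub_mul_sq_le {a : A} (ha : 0 ≤ a) (ha1 : ‖a‖ ≤ 1) (x y : A) :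
    ‖a * x + (y - a * y)‖ ^ 2 ≤ ‖x‖ ^ 2 + ‖y‖ ^ 2 := by
  have hsa : star a = a := (IsSelfAdjoint.of_nonneg ha).star_eq
  have hdefect : 0 ≤ a - a * a := sub_nonneg.mpr (mul_self_le_self_of_norm_le_one ha ha1)
  have hdecomp : star x * x + star y * y - star (a * x + (y - a * y)) * (a * x + (y - a * y))
      = star (x - a * x - a * y) * (x - a * x - a * y)
        + 2 • (star x * (a - a * a) * x) + 2 • (star y * (a - a * a) * y) := by
    simp only [star_add, star_sub, star_mul, hsa]
    noncomm_ring
  have hle : star (a * x + (y - a * y)) * (a * x + (y - a * y)) ≤ star x * x + star y * y := by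
    rw [← sub_nonneg, hdecomp]
    exact add_nonneg (add_nonneg (star_mul_self_nonneg _)
      (nsmul_nonneg (star_left_conjugate_nonneg hdefect x) 2))
      (nsmul_nonneg (star_left_conjugate_nonneg hdefect y) 2)
  simp only [sq, ← CStarRing.norm_star_mul_self]
  exact (CStarAlgebra.norm_le_norm_of_nonneg_of_le (star_mul_self_nonneg _) hle).trans
    (norm_add_le _ _)

lemma norm_one_sub_mul_le_one {a : A} (ha : 0 ≤ a) (ha1 : ‖a‖ ≤ 1) :
    ‖1 - ContinuousLinearMap.mul ℂ A a‖ ≤ 1 := by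
  refine ContinuousLinearMap.opNorm_le_bound _ zero_le_one fun x ↦ ?_
  have h := norm_mul_add_sub_mul_sq_le ha ha1 0 x
  simp only [mul_zero, zero_add, norm_zero, ne_eq, OfNat.ofNat_ne_zero, not_false_eq_true,
    zero_pow] at h
  simpa using le_of_sq_le_sq h (norm_nonneg x)

variable {ι : Type*} [Fintype ι]

open WithCStarModule in
lemma norm_sum_mul_sq_le (u x : ι → A) :
    ‖∑ i, u i * x i‖ ^ 2 ≤ ‖∑ i, u i * star (u i)‖ * ‖∑ i, star (x i) * x i‖ := by
  have h := CStarModule.norm_inner_le (A := A) C⋆ᵐᵒᵈ(A, ι → A)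
    (x := (equiv A (ι → A)).symm fun i ↦ star (x i)) (y := (equiv A (ι → A)).symm u)
  have h2 := pow_le_pow_left₀ (norm_nonneg _) h 2
  rw [mul_pow, pi_norm_sq, pi_norm_sq, pi_inner, mul_comm] at h2
  simpa [inner_def] using h2

open WithCStarModule in
lemma norm_le_sqrt_norm_sum_mul_star (u : ι → A) (i : ι) :
    ‖u i‖ ≤ √‖∑ j, u j * star (u j)‖ := by
  simpa [pi_norm, inner_def] using norm_apply_le_norm ((equiv A (ι → A)).symm u) i

end CStarInequalities

section NormingVectors

variable {E : Type*} [NormedAddCommGroup E] [NormedSpace ℂ E]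

lemma re_apply_le_opNorm_mul_norm (f : E →L[ℂ] ℂ) (x : E) : (f x).re ≤ ‖f‖ * ‖x‖ :=
  (Complex.re_le_norm _).trans (f.le_opNorm x)

lemma exists_lt_re_apply_of_lt_opNorm (f : E →L[ℂ] ℂ) {r : ℝ} (hr : r < ‖f‖) :
    ∃ x, ‖x‖ ≤ 1 ∧ r < (f x).re := by
  obtain ⟨x, hx, hrx⟩ := f.exists_lt_apply_of_lt_opNorm hr
  obtain ⟨c, hc, hcx⟩ := Complex.exists_norm_eq_mul_self (f x)
  refine ⟨c • x, by rw [norm_smul, hc, one_mul]; exact hx.le, ?_⟩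
  rwa [map_smul, smul_eq_mul, ← hcx, Complex.ofReal_re]

lemma opNorm_le_of_forall_re_apply_le (f : E →L[ℂ] ℂ) {M : ℝ}
    (h : ∀ x, ‖x‖ ≤ 1 → (f x).re ≤ M) : ‖f‖ ≤ M := by
  by_contra! hM
  obtain ⟨x, hx, hMx⟩ := exists_lt_re_apply_of_lt_opNorm f hM
  exact (h x hx).not_gt hMx

lemma exists_mul_opNorm_le_re_apply (f : E →L[ℂ] ℂ) {c : ℝ} (hc : c < 1) :
    ∃ x, ‖x‖ ≤ 1 ∧ c * ‖f‖ ≤ (f x).re := by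
  rcases (norm_nonneg f).eq_or_lt with hf | hf
  · exact ⟨0, by simp, by simp [← hf]⟩
  · obtain ⟨x, hx, hcx⟩ := exists_lt_re_apply_of_lt_opNorm f (mul_lt_of_lt_one_left hf hc)
    exact ⟨x, hx, hcx.le⟩

lemma exists_forall_one_sub_le_re_apply {ι : Type*} [Fintype ι] {f : ι → E →L[ℂ] ℂ} {κ : ℝ}
    (hf : ∀ i, ‖f i‖ ≤ 1) (hsum : Fintype.card ι - κ < ‖∑ i, f i‖) :
    ∃ x, ‖x‖ ≤ 1 ∧ ∀ i, 1 - κ ≤ (f i x).re := by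
  obtain ⟨x, hx, hre⟩ := exists_lt_re_apply_of_lt_opNorm _ hsum
  have hnonneg (i : ι) : 0 ≤ 1 - (f i x).re := by
    have := re_apply_le_opNorm_mul_norm (f i) x
    nlinarith [hf i, norm_nonneg (f i), norm_nonneg x]
  refine ⟨x, hx, fun i ↦ ?_⟩
  have hle := Finset.single_le_sum (fun j _ ↦ hnonneg j) (Finset.mem_univ i)
  rw [Finset.sum_sub_distrib, Finset.sum_const, Finset.card_univ, nsmul_one] at hle
  rw [sum_apply, Complex.re_sum] at hre
  linarith

end NormingVectors

section StarConj

variable {E F G : Type*} [NormedAddCommGroup E] [NormedSpace ℂ E] [StarAddMonoid E]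
  [StarModule ℂ E] [NormedStarGroup E] [NormedAddCommGroup F] [NormedSpace ℂ F] [StarAddMonoid F]
  [StarModule ℂ F] [NormedStarGroup F] [NormedAddCommGroup G] [NormedSpace ℂ G] [StarAddMonoid G]
  [StarModule ℂ G] [NormedStarGroup G]

/-- The conjugate `x ↦ (f x⋆)⋆` of a continuous linear map. In a C⋆-algebra it exchanges left and
right multiplications, so that one-sided results transfer to the other side. -/
noncomputable def starConj (f : E →L[ℂ] F) : E →L[ℂ] F :=
  ((starL ℂ : F ≃L⋆[ℂ] F) : F →L⋆[ℂ] F).comp (f.comp ((starL ℂ : E ≃L⋆[ℂ] E) : E →L⋆[ℂ] E))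

@[simp]
lemma starConj_apply (f : E →L[ℂ] F) (x : E) : starConj f x = star (f (star x)) := rfl

@[simp]
lemma starConj_starConj (f : E →L[ℂ] F) : starConj (starConj f) = f := by
  ext x
  simp

@[simp]
lemma starConj_id : starConj (ContinuousLinearMap.id ℂ E) = ContinuousLinearMap.id ℂ E := by
  ext x
  simp

lemma starConj_sub (f g : E →L[ℂ] F) : starConj (f - g) = starConj f - starConj g := by
  ext x
  simp

lemma starConj_comp (g : F →L[ℂ] G) (f : E →L[ℂ] F) :
    starConj (g ∘L f) = starConj g ∘L starConj f := by
  ext x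
  simp

@[simp]
lemma norm_starConj (f : E →L[ℂ] F) : ‖starConj f‖ = ‖f‖ := by
  have hle (g : E →L[ℂ] F) : ‖starConj g‖ ≤ ‖g‖ :=
    ContinuousLinearMap.opNorm_le_bound _ (norm_nonneg g) fun x ↦ by
      simpa using g.le_opNorm (star x)
  exact (hle f).antisymm (by simpa using hle (starConj f))

end StarConj

section Functionals

variable {A : Type*} [NonUnitalCStarAlgebra A]

open ContinuousLinearMap (mul)

lemma starConj_mul (a : A) : starConj (mul ℂ A a) = (mul ℂ A).flip (star a) := by
  ext x
  simp

lemma norm_comp_mul_flip (ψ : A →L[ℂ] ℂ) (a : A) :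
    ‖ψ ∘L (mul ℂ A).flip a‖ = ‖starConj ψ ∘L mul ℂ A (star a)‖ := by
  rw [← norm_starConj (starConj ψ ∘L _), starConj_comp, starConj_starConj, starConj_mul, star_star]

lemma norm_sub_twoSidedFunctional_le (ψ : A →L[ℂ] ℂ) (a b : A) :
    ‖ψ - twoSidedFunctional ψ a b‖
      ≤ ‖ψ - ψ ∘L mul ℂ A a‖ + ‖ψ - ψ ∘L (mul ℂ A).flip b‖ * ‖a‖ := by
  have hsplit : ψ - twoSidedFunctional ψ a b
      = (ψ - ψ ∘L mul ℂ A a) + (ψ - ψ ∘L (mul ℂ A).flip b) ∘L mul ℂ A a := by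
    ext x
    simp [twoSidedFunctional]
  rw [hsplit]
  exact (norm_add_le _ _).trans (by
    gcongr
    exact (ContinuousLinearMap.opNorm_comp_le _ _).trans
      (by gcongr; exact ContinuousLinearMap.opNorm_mul_apply_le ℂ A a))

lemma norm_sub_twoSidedFunctional_smul (ψ : A →L[ℂ] ℂ) (c : ℝ) (a b : A) :
    ‖c • ψ - twoSidedFunctional (c • ψ) a b‖ = |c| * ‖ψ - twoSidedFunctional ψ a b‖ := by
  rw [← Real.norm_eq_abs, ← norm_smul, smul_sub]
  rfl

variable [PartialOrder A] [StarOrderedRing A]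

/- If `a y` almost norms `ψ`, then perturbing it to `a y + t (x - a x)` costs only `O(t²)` in norm
but would gain `t ψ(x - a x)`. -/
lemma norm_sub_comp_mul_le {ψ : A →L[ℂ] ℂ} (hψ : ‖ψ‖ ≤ 1) {a y : A} (ha : 0 ≤ a) (ha1 : ‖a‖ ≤ 1)
    (hy : ‖y‖ ≤ 1) {t : ℝ} (ht : 0 < t) (hre : 1 - t ^ 2 / 2 ≤ (ψ (a * y)).re) :
    ‖ψ - ψ ∘L mul ℂ A a‖ ≤ t := by
  refine opNorm_le_of_forall_re_apply_le _ fun x hx ↦ ?_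
  set z : A := a * y + ((t : ℂ) • x - a * ((t : ℂ) • x)) with hz
  have htx : ‖(t : ℂ) • x‖ ≤ t := by
    rw [norm_smul, Complex.norm_of_nonneg ht.le]
    exact mul_le_of_le_one_right ht.le hx
  have hznorm : ‖z‖ ≤ 1 + t ^ 2 / 2 := by
    refine le_of_sq_le_sq ((norm_mul_add_sub_mul_sq_le ha ha1 y _).trans ?_) (by positivity)
    nlinarith [norm_nonneg y, norm_nonneg ((t : ℂ) • x), sq_nonneg (t ^ 2)]
  have hψz : (ψ z).re ≤ 1 + t ^ 2 / 2 :=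
    (re_apply_le_opNorm_mul_norm ψ z).trans
      ((mul_le_of_le_one_left (norm_nonneg z) hψ).trans hznorm)
  have hexpand : (ψ z).re = (ψ (a * y)).re + t * (ψ x - ψ (a * x)).re := by
    rw [hz, mul_smul_comm, ← smul_sub, map_add, map_smul, map_sub, Complex.add_re, smul_eq_mul,
      Complex.re_ofReal_mul]
  simp only [sub_apply, ContinuousLinearMap.comp_apply, ContinuousLinearMap.mul_apply']
  nlinarith

variable {ι : Type*} [Fintype ι]

lemma norm_sum_smul_mul_star_mul_le {u x : ι → A} (hu : ‖∑ i, u i * star (u i)‖ ≤ 1) (c : ι → ℂ)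
    (hx : ∀ i, ‖x i‖ ≤ 1) :
    ‖∑ i, c i • (u i * star (u i) * x i)‖ ≤ √(∑ i, ‖c i‖ ^ 2) := by
  set y : ι → A := fun i ↦ c i • (star (u i) * x i) with hy
  have hynorm (i : ι) : ‖y i‖ ≤ ‖c i‖ := by
    have hui : ‖u i‖ ≤ 1 :=
      (norm_le_sqrt_norm_sum_mul_star u i).trans (Real.sqrt_le_one.mpr hu)
    rw [hy, norm_smul]
    refine mul_le_of_le_one_right (norm_nonneg _) ((norm_mul_le _ _).trans ?_)
    rw [norm_star]
    exact mul_le_one₀ hui (norm_nonneg _) (hx i)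
  have hsum : ∑ i, c i • (u i * star (u i) * x i) = ∑ i, u i * y i :=
    Finset.sum_congr rfl fun i _ ↦ by rw [hy, mul_smul_comm, mul_assoc]
  rw [hsum]
  refine Real.le_sqrt_of_sq_le ((norm_sum_mul_sq_le u y).trans
    ((mul_le_of_le_one_left (norm_nonneg _) hu).trans ((norm_sum_le _ _).trans ?_)))
  simp only [CStarRing.norm_star_mul_self, ← sq]
  exact Finset.sum_le_sum fun i _ ↦ pow_le_pow_left₀ (norm_nonneg _) (hynorm i) 2

lemma sum_norm_comp_mul_sq_le (ψ : A →L[ℂ] ℂ) {u : ι → A} (hu : ‖∑ i, u i * star (u i)‖ ≤ 1) :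
    ∑ i, ‖ψ ∘L mul ℂ A (u i * star (u i))‖ ^ 2 ≤ ‖ψ‖ ^ 2 := by
  set χ : ι → A →L[ℂ] ℂ := fun i ↦ ψ ∘L mul ℂ A (u i * star (u i)) with hχ
  obtain ⟨S, hS⟩ : ∃ S, S = ∑ i, ‖χ i‖ ^ 2 := ⟨_, rfl⟩
  have happrox (c : ℝ) (hc : c < 1) : c * S ≤ ‖ψ‖ * √S := by
    choose x hx hre using fun i ↦ exists_mul_opNorm_le_re_apply (χ i) hc
    have hbound := norm_sum_smul_mul_star_mul_le hu (fun i ↦ (‖χ i‖ : ℂ)) hx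
    simp only [Complex.norm_real, norm_norm, ← hS] at hbound
    calc c * S = ∑ i, ‖χ i‖ * (c * ‖χ i‖) := by
          rw [hS, Finset.mul_sum]
          exact Finset.sum_congr rfl fun i _ ↦ by ring
      _ ≤ ∑ i, ‖χ i‖ * (χ i (x i)).re :=
          Finset.sum_le_sum fun i _ ↦ mul_le_mul_of_nonneg_left (hre i) (norm_nonneg _)
      _ = (ψ (∑ i, (‖χ i‖ : ℂ) • (u i * star (u i) * x i))).re := by simp [hχ]
      _ ≤ ‖ψ‖ * √S := (re_apply_le_opNorm_mul_norm ψ _).trans (by gcongr)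
  have hlim : S ≤ ‖ψ‖ * √S :=
    le_of_tendsto (x := 𝓝[<] 1) (((continuous_mul_const S).tendsto' 1 S (one_mul S)).mono_left
      nhdsWithin_le_nhds) (eventually_mem_nhdsWithin.mono happrox)
  have hS0 : 0 ≤ S := hS ▸ Finset.sum_nonneg fun i _ ↦ sq_nonneg _
  have hsqrt : √S ≤ ‖ψ‖ := by
    by_contra! hlt
    nlinarith [Real.mul_self_sqrt hS0, norm_nonneg ψ]
  calc ∑ i, ‖χ i‖ ^ 2 = √S ^ 2 := by rw [Real.sq_sqrt hS0, hS]
    _ ≤ ‖ψ‖ ^ 2 := pow_le_pow_left₀ (Real.sqrt_nonneg S) hsqrt 2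

lemma exists_norm_comp_mul_le_and_norm_comp_mul_flip_le {ψ : A →L[ℂ] ℂ} (hψ : ‖ψ‖ ≤ 1)
    {u : ι → A} (hrow : ‖∑ i, u i * star (u i)‖ ≤ 1) (hcol : ‖∑ i, star (u i) * u i‖ ≤ 1)
    {s : ℝ} (hs : 0 ≤ s) (hcard : 2 < Fintype.card ι * s ^ 2) :
    ∃ i, ‖ψ ∘L mul ℂ A (u i * star (u i))‖ ≤ s ∧
      ‖ψ ∘L (mul ℂ A).flip (star (u i) * u i)‖ ≤ s := by
  have hleft := sum_norm_comp_mul_sq_le ψ hrow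
  have hright := sum_norm_comp_mul_sq_le (starConj ψ) (u := fun i ↦ star (u i)) (by simpa)
  have hflip (i : ι) : ‖starConj ψ ∘L mul ℂ A (star (u i) * u i)‖
      = ‖ψ ∘L (mul ℂ A).flip (star (u i) * u i)‖ := by
    rw [norm_comp_mul_flip, star_mul, star_star]
  simp only [star_star, hflip, norm_starConj] at hright
  have hψsq : ‖ψ‖ ^ 2 ≤ 1 := pow_le_one₀ (norm_nonneg _) hψ
  obtain ⟨i, -, hi⟩ := Finset.exists_lt_of_sum_lt (s := Finset.univ)
    (f := fun i ↦ ‖ψ ∘L mul ℂ A (u i * star (u i))‖ ^ 2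
      + ‖ψ ∘L (mul ℂ A).flip (star (u i) * u i)‖ ^ 2) (g := fun _ ↦ s ^ 2) (by
    rw [Finset.sum_add_distrib, Finset.sum_const, Finset.card_univ, nsmul_eq_mul]
    linarith)
  refine ⟨i, ?_, ?_⟩ <;> refine le_of_sq_le_sq ?_ hs <;> nlinarith [sq_nonneg
    ‖ψ ∘L mul ℂ A (u i * star (u i))‖, sq_nonneg ‖ψ ∘L (mul ℂ A).flip (star (u i) * u i)‖]

end Functionals

section Fourier

open scoped ZMod

variable {N : ℕ} [NeZero N]

lemma map_invDFT {E F : Type*} [AddCommGroup E] [Module ℂ E] [AddCommGroup F] [Module ℂ F]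
    (T : E →ₗ[ℂ] F) (x : ZMod N → E) (k : ZMod N) : T (𝓕⁻ x k) = 𝓕⁻ (fun j ↦ T (x j)) k := by
  simp only [ZMod.invDFT_apply, map_smul, map_sum]

lemma star_invDFT {E : Type*} [AddCommGroup E] [Module ℂ E] [StarAddMonoid E] [StarModule ℂ E]
    (x : ZMod N → E) (k : ZMod N) : star (𝓕⁻ x k) = 𝓕⁻ (fun j ↦ star (x j)) (-k) := by
  simp only [ZMod.invDFT_apply, star_smul, star_sum, mul_neg, AddChar.map_neg_eq_conj,
    star_inv₀, star_natCast, RCLike.star_def]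

lemma sum_invDFT_mul_star {R : Type*} [NonUnitalRing R] [StarRing R] [Module ℂ R]
    [IsScalarTower ℂ R R] [SMulCommClass ℂ R R] [StarModule ℂ R] (x : ZMod N → R) :
    ∑ k, 𝓕⁻ x k * star (𝓕⁻ x k) = (N : ℂ)⁻¹ • ∑ j, x j * star (x j) := by
  have hdft (j : ZMod N) : x j = ∑ k, ZMod.stdAddChar (-(k * j)) • 𝓕⁻ x k := by
    rw [← ZMod.dft_apply, LinearEquiv.apply_symm_apply]
  calc ∑ k, 𝓕⁻ x k * star (𝓕⁻ x k)
      = ∑ k, ∑ j, (N : ℂ)⁻¹ • (ZMod.stdAddChar (-(k * j)) • 𝓕⁻ x k) * star (x j) := by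
        refine Finset.sum_congr rfl fun k _ ↦ ?_
        simp only [star_invDFT, ZMod.invDFT_apply _ (-k), mul_smul_comm, Finset.mul_sum,
          Finset.smul_sum, smul_mul_assoc, mul_neg, mul_comm k]
    _ = (N : ℂ)⁻¹ • ∑ j, x j * star (x j) := by
        rw [Finset.sum_comm, Finset.smul_sum]
        refine Finset.sum_congr rfl fun j _ ↦ ?_
        conv_rhs => enter [2, 1]; rw [hdft j]
        simp only [smul_mul_assoc, Finset.sum_mul, Finset.smul_sum]

section CStar

variable {A : Type*} [NonUnitalCStarAlgebra A] {x : ZMod N → A}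

lemma norm_sum_invDFT_mul_star_le_one (hx : ∀ j, ‖x j‖ ≤ 1) :
    ‖∑ k, 𝓕⁻ x k * star (𝓕⁻ x k)‖ ≤ 1 := by
  have hN : (0 : ℝ) < N := Nat.cast_pos.mpr (NeZero.pos N)
  have hsum : ‖∑ j, x j * star (x j)‖ ≤ N := by
    refine (norm_sum_le_of_le Finset.univ fun j _ ↦ ?_).trans_eq (b := ∑ _ : ZMod N, (1 : ℝ))
      (by simp)
    exact norm_mul_star_self_le_one (hx j)
  rw [sum_invDFT_mul_star, norm_smul, norm_inv, Complex.norm_natCast, inv_mul_le_iff₀ hN, mul_one]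
  exact hsum

lemma norm_sum_star_invDFT_mul_le_one (hx : ∀ j, ‖x j‖ ≤ 1) :
    ‖∑ k, star (𝓕⁻ x k) * 𝓕⁻ x k‖ ≤ 1 := by
  have h := norm_sum_invDFT_mul_star_le_one (x := fun j ↦ star (x j)) (by simpa)
  rw [← Equiv.sum_comp (Equiv.neg (ZMod N))] at h
  simpa [← star_invDFT] using h

end CStar

/- Norming all the combinations `∑ i, e^(2πijs/N) f i` at once and averaging over `s` separates
the `f i`: the `i`-th Fourier coefficient of the norming vectors norms `f i`. -/
lemma exists_forall_one_sub_le_re_apply_invDFT {E : Type*} [NormedAddCommGroup E]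
    [NormedSpace ℂ E] {f : ZMod N → E →L[ℂ] ℂ} {κ : ℝ} (hf : ∀ i, ‖f i‖ ≤ 1)
    (hsum : ∀ w : ZMod N → ℂ, (∀ i, ‖w i‖ = 1) → N - κ < ‖∑ i, w i • f i‖) :
    ∃ x : ZMod N → E, (∀ s, ‖x s‖ ≤ 1) ∧ ∀ i, 1 - κ ≤ (f i (𝓕⁻ x i)).re := by
  have hnorming (s : ZMod N) : ∃ x, ‖x‖ ≤ 1 ∧
      ∀ i, 1 - κ ≤ (ZMod.stdAddChar (s * i) * f i x).re := by
    have hchar (i : ZMod N) : ‖ZMod.stdAddChar (s * i)‖ = 1 := AddChar.norm_apply _ _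
    simpa using exists_forall_one_sub_le_re_apply
      (f := fun i ↦ ZMod.stdAddChar (s * i) • f i) (κ := κ)
      (fun i ↦ by rw [norm_smul, hchar, one_mul]; exact hf i) (by simpa using hsum _ hchar)
  choose x hx hre using hnorming
  refine ⟨x, hx, fun i ↦ ?_⟩
  have hN : (0 : ℝ) < N := Nat.cast_pos.mpr (NeZero.pos N)
  have hmean : (f i (𝓕⁻ x i)).re = (N : ℝ)⁻¹ * ∑ s, (ZMod.stdAddChar (s * i) * f i (x s)).re := by
    rw [ZMod.invDFT_apply, map_smul, map_sum, smul_eq_mul, ← Complex.ofReal_natCast,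
      ← Complex.ofReal_inv, Complex.re_ofReal_mul, Complex.re_sum]
    simp only [map_smul, smul_eq_mul]
  have hcard := Finset.card_nsmul_le_sum Finset.univ _ _ fun s _ ↦ hre s i
  rw [Finset.card_univ, ZMod.card, nsmul_eq_mul] at hcard
  rwa [hmean, le_inv_mul_iff₀ hN]

end Fourier

section Cutoffs

variable {A : Type*} [NonUnitalCStarAlgebra A]

/-- The spectral cutoff of `h` to the part of its spectrum above `1 / 2`. For `‖h‖ ≤ 1` it is a
smoothed spectral projection on which `plateau h` acts as the identity. -/
noncomputable def peak (h : A) : A := cfcₙ (fun r : ℝ ↦ max (2 * r - 1) 0) h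

/-- The quotient of `plateau h` by `h`. Above `1 / 2` it is the inverse of `h`; the factor `4 r`
makes the function vanish at `0`, as the non-unital functional calculus requires. -/
noncomputable def plateauQuotient (h : A) : A :=
  cfcₙ (fun r : ℝ ↦ min (4 * r) (max r (1 / 2))⁻¹) h

/-- A smoothed spectral projection of `h` which is the identity on the part of the spectrum above
`1 / 2`, and which is divisible by `h`. -/
noncomputable def plateau (h : A) : A := h * plateauQuotient h

lemma continuous_plateauQuotient : Continuous fun r : ℝ ↦ min (4 * r) (max r (1 / 2))⁻¹ := by
  refine (continuous_const_mul 4).min (Continuous.inv₀ (by fun_prop) fun r ↦ ?_)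
  positivity

variable {h : A}

lemma plateau_eq_cfcₙ (hh : IsSelfAdjoint h) :
    plateau h = cfcₙ (fun r : ℝ ↦ r * min (4 * r) (max r (1 / 2))⁻¹) h := by
  have hcont := continuous_plateauQuotient.continuousOn (s := quasispectrum ℝ h)
  rw [plateau, plateauQuotient, cfcₙ_mul (fun r ↦ r) _ h, cfcₙ_id' ℝ h]

variable [PartialOrder A] [StarOrderedRing A]

lemma peak_nonneg (h : A) : 0 ≤ peak h := cfcₙ_nonneg fun _ _ ↦ le_max_right _ _

lemma norm_peak_le_one (hh : 0 ≤ h) (hh1 : ‖h‖ ≤ 1) : ‖peak h‖ ≤ 1 := by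
  refine norm_cfcₙ_le fun r hr ↦ ?_
  have hr1 := (quasispectrum_subset_Icc_zero_one hh hh1 hr).2
  rw [Real.norm_of_nonneg (le_max_right _ _)]
  exact max_le (by linarith) zero_le_one

lemma norm_plateauQuotient_le_two (hh : 0 ≤ h) : ‖plateauQuotient h‖ ≤ 2 := by
  refine norm_cfcₙ_le fun r hr ↦ ?_
  have hr0 := quasispectrum_nonneg_of_nonneg h hh r hr
  rw [Real.norm_of_nonneg (by positivity)]
  refine (min_le_right _ _).trans (inv_le_of_inv_le₀ two_pos ?_)
  rw [← one_div]
  exact le_max_right _ _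

lemma plateau_nonneg (hh : 0 ≤ h) : 0 ≤ plateau h := by
  rw [plateau_eq_cfcₙ hh.isSelfAdjoint]
  refine cfcₙ_nonneg fun r hr ↦ ?_
  have hr0 := quasispectrum_nonneg_of_nonneg h hh r hr
  positivity

lemma norm_plateau_le_one (hh : 0 ≤ h) : ‖plateau h‖ ≤ 1 := by
  rw [plateau_eq_cfcₙ hh.isSelfAdjoint]
  refine norm_cfcₙ_le fun r hr ↦ ?_
  have hr0 := quasispectrum_nonneg_of_nonneg h hh r hr
  rw [Real.norm_of_nonneg (by positivity)]
  calc r * min (4 * r) (max r (1 / 2))⁻¹ ≤ max r (1 / 2) * (max r (1 / 2))⁻¹ := by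
        gcongr
        exacts [le_max_left _ _, min_le_right _ _]
    _ = 1 := mul_inv_cancel₀ (by positivity)

lemma plateau_mul_peak (hh : 0 ≤ h) : plateau h * peak h = peak h := by
  have hcont : ContinuousOn (fun r : ℝ ↦ r * min (4 * r) (max r (1 / 2))⁻¹) (quasispectrum ℝ h) :=
    (continuous_id.mul continuous_plateauQuotient).continuousOn
  rw [plateau_eq_cfcₙ hh.isSelfAdjoint, peak, ← cfcₙ_mul ..]
  refine cfcₙ_congr fun r _ ↦ ?_
  rcases le_total r (1 / 2) with hr | hr
  · simp [max_eq_right (show 2 * r - 1 ≤ 0 by linarith)]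
  · have hr0 : 0 < r := by linarith
    have hmin : min (4 * r) r⁻¹ = r⁻¹ := min_eq_right (by
      rw [inv_le_iff_one_le_mul₀ hr0]; nlinarith)
    simp only [max_eq_left hr, hmin, mul_inv_cancel₀ hr0.ne', one_mul]

lemma peak_mul_plateau (hh : 0 ≤ h) : peak h * plateau h = peak h := by
  have hstar := congrArg star (plateau_mul_peak hh)
  rwa [star_mul, (peak_nonneg h).isSelfAdjoint.star_eq,
    (plateau_nonneg hh).isSelfAdjoint.star_eq] at hstar

/- The constant `5` makes `√r (5 - max (2 r - 1) 0)` largest at `r = 1`, with value `4`. Hence a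
functional of norm one which almost norms `u` also almost norms `peak (u u⋆) u`. -/
lemma norm_five_nsmul_sub_peak_mul_le {u : A} (hu : ‖u‖ ≤ 1) :
    ‖5 • u - peak (u * star u) * u‖ ≤ 4 := by
  obtain ⟨h, hh⟩ : ∃ h, h = u * star u := ⟨_, rfl⟩
  have hh0 : 0 ≤ h := hh ▸ mul_star_self_nonneg u
  have hh1 : ‖h‖ ≤ 1 := hh ▸ norm_mul_star_self_le_one hu
  rw [← hh]
  set f : ℝ → ℝ := fun r ↦ max (2 * r - 1) 0 with hf
  have hcfc : (5 • u - peak h * u) * star (5 • u - peak h * u)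
      = cfcₙ (fun r ↦ 5 • (5 • r - f r * r) - (5 • (r * f r) - f r * r * f r)) h := by
    have : Continuous f := by fun_prop
    have : f 0 = 0 := by norm_num [hf]
    have hpeak : star (peak h) = peak h := (peak_nonneg h).isSelfAdjoint.star_eq
    rw [cfcₙ_sub .., cfcₙ_smul .., cfcₙ_sub .., cfcₙ_smul .., cfcₙ_sub .., cfcₙ_smul ..,
      cfcₙ_mul .., cfcₙ_mul .., cfcₙ_mul .., cfcₙ_mul .., cfcₙ_id' ℝ h, ← peak]
    generalize peak h = a at hpeak ⊢
    simp only [star_sub, star_nsmul, star_mul, hpeak, hh]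
    noncomm_ring
  have hnorm : ‖(5 • u - peak h * u) * star (5 • u - peak h * u)‖ ≤ 4 * 4 := by
    rw [hcfc]
    refine norm_cfcₙ_le fun r hr ↦ ?_
    obtain ⟨hr0, hr1⟩ := quasispectrum_subset_Icc_zero_one hh0 hh1 hr
    have hsq : 5 • (5 • r - f r * r) - (5 • (r * f r) - f r * r * f r) = r * (5 - f r) ^ 2 := by
      simp only [nsmul_eq_mul]
      ring
    rw [hsq, Real.norm_of_nonneg (by positivity), hf]
    rcases max_cases (2 * r - 1) 0 with ⟨hmax, -⟩ | ⟨hmax, hle⟩ <;> simp only [hmax]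
    · nlinarith [mul_nonneg (sq_nonneg (1 - r)) (show 0 ≤ 4 - r by linarith)]
    · linarith
  rw [CStarRing.norm_self_mul_star] at hnorm
  exact (mul_self_le_mul_self_iff (norm_nonneg _) zero_le_four).mpr hnorm

end Cutoffs

section Compression

variable {A : Type*} [NonUnitalCStarAlgebra A]

open ContinuousLinearMap (mul)

/-- The elements of `A` annihilating the range of `T` from the left. -/
def leftAnnihilator (T : A →L[ℂ] A) : Set A := {c | ∀ x, c * T x = 0}

/-- The map `x ↦ (1 - g) (T x) (1 - p)`, which cuts the range of `T` away from `g` and `p`. -/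
noncomputable def compress (g p : A) (T : A →L[ℂ] A) : A →L[ℂ] A :=
  (1 - mul ℂ A g) ∘L (1 - (mul ℂ A).flip p) ∘L T

lemma compress_apply (g p : A) (T : A →L[ℂ] A) (x : A) :
    compress g p T x = T x - T x * p - g * (T x - T x * p) := rfl

lemma starConj_compress (g p : A) (T : A →L[ℂ] A) :
    starConj (compress g p T) = compress (star p) (star g) (starConj T) := by
  ext x
  simp only [starConj_apply, compress_apply, star_sub, star_mul]
  noncomm_ring

lemma mem_leftAnnihilator_compress {c g : A} {T : A →L[ℂ] A} (hc : c ∈ leftAnnihilator T)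
    (hcg : c * g = 0) (p : A) : c ∈ leftAnnihilator (compress g p T) := fun x ↦ by
  simp only [compress_apply, mul_sub, ← mul_assoc, hc x, hcg, zero_mul, sub_zero]

lemma mem_leftAnnihilator_compress_of_mul_eq_self {a g : A} (hag : a * g = a) (p : A)
    (T : A →L[ℂ] A) : a ∈ leftAnnihilator (compress g p T) := fun x ↦ by
  rw [compress_apply, mul_sub, ← mul_assoc, hag, sub_self]

variable [PartialOrder A] [StarOrderedRing A] {g p : A} {T : A →L[ℂ] A}

lemma norm_one_sub_mul_flip_le_one (hp : 0 ≤ p) (hp1 : ‖p‖ ≤ 1) :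
    ‖1 - (mul ℂ A).flip p‖ ≤ 1 := by
  have hconj : starConj (1 - mul ℂ A p) = 1 - (mul ℂ A).flip p := by
    rw [starConj_sub, starConj_mul, hp.isSelfAdjoint.star_eq]
    exact congrArg (· - _) starConj_id
  rw [← hconj, norm_starConj]
  exact norm_one_sub_mul_le_one hp hp1

lemma norm_compress_le (hg : 0 ≤ g) (hg1 : ‖g‖ ≤ 1) (hp : 0 ≤ p) (hp1 : ‖p‖ ≤ 1) :
    ‖compress g p T‖ ≤ ‖T‖ := by
  refine (ContinuousLinearMap.opNorm_comp_le _ _).trans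
    ((mul_le_of_le_one_left (norm_nonneg _) (norm_one_sub_mul_le_one hg hg1)).trans ?_)
  exact (ContinuousLinearMap.opNorm_comp_le _ _).trans
    (mul_le_of_le_one_left (norm_nonneg _) (norm_one_sub_mul_flip_le_one hp hp1))

lemma norm_sub_comp_compress_le (ψ : A →L[ℂ] ℂ) (hp : 0 ≤ p) (hp1 : ‖p‖ ≤ 1) (hT : ‖T‖ ≤ 1) :
    ‖ψ - ψ ∘L compress g p T‖
      ≤ ‖ψ - ψ ∘L T‖ + ‖ψ ∘L (mul ℂ A).flip p‖ + ‖ψ ∘L mul ℂ A g‖ := by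
  have hsplit : ψ - ψ ∘L compress g p T = (ψ - ψ ∘L T) + (ψ ∘L (mul ℂ A).flip p) ∘L T
      + (ψ ∘L mul ℂ A g) ∘L (1 - (mul ℂ A).flip p) ∘L T := by
    ext x
    simp only [sub_apply, ContinuousLinearMap.comp_apply, compress_apply, mul_sub, map_sub,
      ContinuousLinearMap.sub_comp, ContinuousLinearMap.comp_sub, add_apply,
      ContinuousLinearMap.flip_apply, ContinuousLinearMap.mul_apply', one_apply_eq_self]
    ring
  have hcut : ‖(1 - (mul ℂ A).flip p) ∘L T‖ ≤ 1 :=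
    (ContinuousLinearMap.opNorm_comp_le _ _).trans
      (mul_le_one₀ (norm_one_sub_mul_flip_le_one hp hp1) (norm_nonneg _) hT)
  rw [hsplit]
  refine norm_add₃_le.trans (add_le_add_three le_rfl ?_ ?_)
  · exact (ContinuousLinearMap.opNorm_comp_le _ _).trans
      (mul_le_of_le_one_right (norm_nonneg _) hT)
  · exact (ContinuousLinearMap.opNorm_comp_le _ _).trans
      (mul_le_of_le_one_right (norm_nonneg _) hcut)

lemma norm_comp_mul_plateau_le (ψ : A →L[ℂ] ℂ) {h : A} (hh : 0 ≤ h) :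
    ‖ψ ∘L mul ℂ A (plateau h)‖ ≤ 2 * ‖ψ ∘L mul ℂ A h‖ := by
  have hfactor : ψ ∘L mul ℂ A (plateau h) = (ψ ∘L mul ℂ A h) ∘L mul ℂ A (plateauQuotient h) := by
    ext x
    simp [plateau, mul_assoc]
  rw [hfactor, mul_comm 2]
  refine (ContinuousLinearMap.opNorm_comp_le _ _).trans ?_
  gcongr
  exact (ContinuousLinearMap.opNorm_mul_apply_le ℂ A _).trans (norm_plateauQuotient_le_two hh)

lemma norm_comp_mul_flip_plateau_le (ψ : A →L[ℂ] ℂ) {h : A} (hh : 0 ≤ h) :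
    ‖ψ ∘L (mul ℂ A).flip (plateau h)‖ ≤ 2 * ‖ψ ∘L (mul ℂ A).flip h‖ := by
  rw [norm_comp_mul_flip, norm_comp_mul_flip, hh.isSelfAdjoint.star_eq,
    (plateau_nonneg hh).isSelfAdjoint.star_eq]
  exact norm_comp_mul_plateau_le (starConj ψ) hh

end Compression

section Peaks

variable {A : Type*} [NonUnitalCStarAlgebra A] [PartialOrder A] [StarOrderedRing A]

open ContinuousLinearMap (mul)

/-- A positive element `a` of norm one which supports `ψ` from the left up to an error `t`, and
which separates `T` from `T'`: it annihilates the range of `T'`, while it is annihilated by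
everything that annihilates the range of `T`. Consecutive peaks along a chain of maps are therefore
orthogonal. -/
structure IsLeftPeak (ψ : A →L[ℂ] ℂ) (t : ℝ) (T T' : A →L[ℂ] A) (a : A) : Prop where
  nonneg : 0 ≤ a
  norm_eq_one : ‖a‖ = 1
  norm_sub_le : ‖ψ - ψ ∘L mul ℂ A a‖ ≤ t
  mem_leftAnnihilator : a ∈ leftAnnihilator T'
  leftAnnihilator_subset : leftAnnihilator T ⊆ leftAnnihilator T'
  mul_eq_zero : ∀ c ∈ leftAnnihilator T, c * a = 0

lemma one_sub_five_mul_le_re_apply_peak_mul {ψ : A →L[ℂ] ℂ} (hψ : ‖ψ‖ ≤ 1) {u : A}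
    (hu : ‖u‖ ≤ 1) {κ : ℝ} (hre : 1 - κ ≤ (ψ u).re) :
    1 - 5 * κ ≤ (ψ (peak (u * star u) * u)).re := by
  have h := (re_apply_le_opNorm_mul_norm ψ _).trans
    (mul_le_mul hψ (norm_five_nsmul_sub_peak_mul_le hu) (norm_nonneg _) zero_le_one)
  rw [map_sub, map_nsmul, Complex.sub_re, Complex.smul_re, nsmul_eq_mul] at h
  push_cast at h
  linarith

lemma IsLeftPeak.of_peak {ψ : A →L[ℂ] ℂ} (hψ : ‖ψ‖ ≤ 1) {T : A →L[ℂ] A} {v : A}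
    (hv : ‖T v‖ ≤ 1) {t : ℝ} (ht : 0 < t) (ht1 : t < 1) (hre : 1 - t ^ 2 / 10 ≤ (ψ (T v)).re)
    (p : A) :
    IsLeftPeak ψ t T (compress (plateau (T v * star (T v))) p T)
      (‖peak (T v * star (T v))‖⁻¹ • peak (T v * star (T v))) := by
  have hpeak := one_sub_five_mul_le_re_apply_peak_mul hψ hv hre
  have hh1 := norm_mul_star_self_le_one hv
  obtain ⟨h, hh⟩ : ∃ h, h = T v * star (T v) := ⟨_, rfl⟩
  rw [← hh] at hpeak hh1 ⊢
  have hh0 : 0 ≤ h := hh ▸ mul_star_self_nonneg (T v)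
  have hre0 : 0 < (ψ (peak h * T v)).re := by nlinarith
  have hne : peak h ≠ 0 := fun h0 ↦ hre0.ne' (by rw [h0, zero_mul, map_zero, Complex.zero_re])
  have hnorm : ‖‖peak h‖⁻¹ • peak h‖ = 1 := norm_smul_inv_norm (𝕜 := ℝ) hne
  have hnonneg : 0 ≤ ‖peak h‖⁻¹ • peak h := smul_nonneg (by positivity) (peak_nonneg h)
  have hplateau (c : A) (hc : c ∈ leftAnnihilator T) : c * plateau h = 0 := by
    rw [plateau, hh, ← mul_assoc, ← mul_assoc, hc v, zero_mul, zero_mul]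
  refine ⟨hnonneg, hnorm, ?_, ?_, fun c hc ↦ ?_, fun c hc ↦ ?_⟩
  · refine norm_sub_comp_mul_le hψ hnonneg hnorm.le hv ht ?_
    rw [smul_mul_assoc, ψ.map_smul_of_tower, Complex.smul_re, smul_eq_mul]
    refine le_trans ?_ (le_mul_of_one_le_left hre0.le
      ((one_le_inv₀ (norm_pos_iff.mpr hne)).mpr (norm_peak_le_one hh0 hh1)))
    linarith
  · refine mem_leftAnnihilator_compress_of_mul_eq_self ?_ p T
    rw [smul_mul_assoc, peak_mul_plateau hh0]
  · exact mem_leftAnnihilator_compress hc (hplateau c hc) p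
  · rw [mul_smul_comm, ← plateau_mul_peak hh0, ← mul_assoc, hplateau c hc, zero_mul, smul_zero]

lemma mul_eq_zero_of_isLeftPeak {ψ : ℕ → A →L[ℂ] ℂ} {t : ℝ} {T : ℕ → A →L[ℂ] A} {a : ℕ → A}
    (ha : ∀ n, IsLeftPeak (ψ n) t (T n) (T (n + 1)) (a n)) {i j : ℕ} (hij : i ≠ j) :
    a i * a j = 0 := by
  have hmono : Monotone fun n ↦ leftAnnihilator (T n) :=
    monotone_nat_of_le_succ fun n ↦ (ha n).leftAnnihilator_subset
  have hlt {i j : ℕ} (h : i < j) : a i * a j = 0 :=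
    (ha j).mul_eq_zero _ (hmono (Nat.succ_le_of_lt h) (ha i).mem_leftAnnihilator)
  rcases hij.lt_or_gt with h | h
  · exact hlt h
  · simpa [(ha i).nonneg.isSelfAdjoint.star_eq, (ha j).nonneg.isSelfAdjoint.star_eq] using
      congrArg star (hlt h)

lemma norm_sub_twoSidedFunctional_le_of_isLeftPeak {ψ : A →L[ℂ] ℂ} {t : ℝ}
    {T T' R R' : A →L[ℂ] A} {a b : A} (ha : IsLeftPeak ψ t T T' a)
    (hb : IsLeftPeak (starConj ψ) t R R' b) : ‖ψ - twoSidedFunctional ψ a b‖ ≤ 2 * t := by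
  have hright : ‖ψ - ψ ∘L (mul ℂ A).flip b‖ ≤ t := by
    have h := hb.norm_sub_le
    rwa [← norm_starConj, starConj_sub, starConj_comp, starConj_starConj, starConj_mul,
      hb.nonneg.isSelfAdjoint.star_eq] at h
  have h := norm_sub_twoSidedFunctional_le ψ a b
  rw [ha.norm_eq_one, mul_one] at h
  linarith [ha.norm_sub_le]

end Peaks

section LowerBound

lemma tsum_nat_add_eq_sum {X : Type*} [AddCommMonoid X] [TopologicalSpace X] {M : ℕ}
    {s : Finset ℕ} (hs : ∀ n ∈ s, M ≤ n) {f : ℕ → X} (hf : ∀ n ∉ s, f n = 0) :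
    ∑' n, f (n + M) = ∑ n ∈ s, f n := by
  rw [← tsum_eq_sum (L := .unconditional ℕ) hf]
  refine (add_left_injective M).tsum_eq fun n hn ↦ ⟨n - M, Nat.sub_add_cancel (hs n ?_)⟩
  exact not_imp_comm.mp (hf n) hn

variable {X : Type*} [NormedAddCommGroup X] [NormedSpace ℂ X]

/-- The finite form of the lower estimate in `SpansL1AlmostIsometrically`, for a sequence that need
not be normalized: finite combinations of a sufficiently late tail are almost `ℓ¹`-large. -/
def HasAlmostL1LowerBound (x : ℕ → X) : Prop :=
  ∀ θ > 0, ∃ M, ∀ s : Finset ℕ, (∀ n ∈ s, M ≤ n) → ∀ w : ℕ → ℂ,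
    (1 - θ) * ∑ n ∈ s, ‖w n‖ ≤ ‖∑ n ∈ s, w n • x n‖

lemma SpansL1AlmostIsometrically.hasAlmostL1LowerBound {x : ℕ → X}
    (hx : SpansL1AlmostIsometrically x) : HasAlmostL1LowerBound fun n ↦ ‖x n‖⁻¹ • x n := by
  obtain ⟨δ, -, hδ, hspan⟩ := hx
  intro θ hθ
  obtain ⟨M, hM⟩ := ((tendsto_order.mp hδ).2 θ hθ).exists
  refine ⟨M, fun s hs w ↦ ?_⟩
  obtain ⟨v, hv⟩ : ∃ v, v = (s : Set ℕ).indicator w := ⟨_, rfl⟩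
  have hmem (n : ℕ) (hn : n ∈ s) : v n = w n := hv ▸ Set.indicator_of_mem hn w
  have hnotMem (n : ℕ) (hn : n ∉ s) : v n = 0 := hv ▸ Set.indicator_of_notMem hn w
  have hnorm (n : ℕ) (hn : n ∉ s) : ‖v n‖ = 0 := by rw [hnotMem n hn, norm_zero]
  have hsmul (n : ℕ) (hn : n ∉ s) : v n • (‖x n‖⁻¹ • x n) = 0 := by rw [hnotMem n hn, zero_smul]
  calc (1 - θ) * ∑ n ∈ s, ‖w n‖ ≤ (1 - δ M) * ∑ n ∈ s, ‖w n‖ := by gcongr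
    _ = (1 - δ M) * ∑' n, ‖v (n + M)‖ := by
        rw [tsum_nat_add_eq_sum (f := fun n ↦ ‖v n‖) hs hnorm]
        exact congrArg _ (Finset.sum_congr rfl fun n hn ↦ by rw [hmem n hn])
    _ ≤ ‖∑' n, v (n + M) • (‖x (n + M)‖⁻¹ • x (n + M))‖ :=
        (hspan M v (summable_of_ne_finset_zero (s := s) hnorm)).1
    _ = ‖∑ n ∈ s, w n • (‖x n‖⁻¹ • x n)‖ := by
        rw [tsum_nat_add_eq_sum (f := fun n ↦ v n • (‖x n‖⁻¹ • x n)) hs hsmul]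
        exact congrArg _ (Finset.sum_congr rfl fun n hn ↦ by rw [hmem n hn])

lemma HasAlmostL1LowerBound.exists_card_sub_lt_norm_sum {x : ℕ → X} (hx : HasAlmostL1LowerBound x)
    (ι : Type*) [Fintype ι] {κ : ℝ} (hκ : 0 < κ) :
    ∃ M, ∀ k : ι → ℕ, Function.Injective k → (∀ i, M ≤ k i) → ∀ w : ι → ℂ, (∀ i, ‖w i‖ = 1) →
      Fintype.card ι - κ < ‖∑ i, w i • x (k i)‖ := by
  obtain ⟨M, hM⟩ := hx (κ / (Fintype.card ι + 1)) (by positivity)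
  refine ⟨M, fun k hk hkM w hw ↦ ?_⟩
  have h := hM (Finset.univ.map ⟨k, hk⟩) (by simpa using hkM) (Function.extend k w 0)
  simp only [Finset.sum_map, Function.Embedding.coeFn_mk, hk.extend_apply, hw, Finset.sum_const,
    Finset.card_univ, nsmul_one] at h
  refine lt_of_lt_of_le ?_ h
  have hlt : κ / (Fintype.card ι + 1) * Fintype.card ι < κ := by
    rw [div_mul_eq_mul_div, div_lt_iff₀ (by positivity)]
    linarith
  linarith

open scoped ZMod in
lemma HasAlmostL1LowerBound.exists_one_sub_le_re_apply_invDFT {E : Type*} [NormedAddCommGroup E]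
    [NormedSpace ℂ E] {ψ : ℕ → E →L[ℂ] ℂ} (hψ : ∀ n, ‖ψ n‖ ≤ 1) (hl1 : HasAlmostL1LowerBound ψ)
    {K : Set ℕ} (hK : K.Infinite) (N : ℕ) [NeZero N] {κ : ℝ} (hκ : 0 < κ) :
    ∃ k : ZMod N → ℕ, (∀ i, k i ∈ K) ∧ ∃ x : ZMod N → E, (∀ s, ‖x s‖ ≤ 1) ∧
      ∀ i, 1 - κ ≤ (ψ (k i) (𝓕⁻ x i)).re := by
  obtain ⟨M, hM⟩ := hl1.exists_card_sub_lt_norm_sum (ZMod N) hκ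
  rw [ZMod.card] at hM
  have htail : (K \ Set.Iio M).Infinite := hK.sdiff (Set.finite_Iio M)
  set k : ZMod N → ℕ := fun i ↦ htail.natEmbedding _ i.val
  have hk (i : ZMod N) : k i ∈ K \ Set.Iio M := (htail.natEmbedding _ i.val).2
  have hkinj : Function.Injective k := Subtype.val_injective.comp
    ((htail.natEmbedding _).injective.comp (ZMod.val_injective N))
  exact ⟨k, fun i ↦ (hk i).1, exists_forall_one_sub_le_re_apply_invDFT (fun i ↦ hψ (k i))
    (hM k hkinj fun i ↦ not_lt.mp (hk i).2)⟩

end LowerBound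

section Stages

variable {A : Type*} [NonUnitalCStarAlgebra A]

open ContinuousLinearMap (mul)

/-- A stage of the construction: a contraction of `A` which moves the functionals `ψ n`, for
infinitely many indices `n`, by a uniform amount less than `η`. -/
structure CompressionStage (ψ : ℕ → A →L[ℂ] ℂ) (η : ℝ) where
  map : A →L[ℂ] A
  indices : Set ℕ
  error : ℝ
  norm_map_le_one : ‖map‖ ≤ 1
  infinite_indices : indices.Infinite
  error_lt : error < η
  norm_sub_le : ∀ n ∈ indices, ‖ψ n - ψ n ∘L map‖ ≤ error

lemma exists_infinite_setOf_mem_and {ι : Type*} [Finite ι] {K : Set ℕ} (hK : K.Infinite)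
    {P : ι → ℕ → Prop} (hP : ∀ n ∈ K, ∃ i, P i n) : ∃ i, {n ∈ K | P i n}.Infinite := by
  by_contra! hfin
  refine hK ((Set.finite_iUnion hfin).subset fun n hn ↦ ?_)
  exact Set.mem_iUnion.mpr ((hP n hn).imp fun i hi ↦ ⟨hn, hi⟩)

variable [PartialOrder A] [StarOrderedRing A] {ψ : ℕ → A →L[ℂ] ℂ}

/- Fourier averages of norming vectors form both a row and a column contraction, so Bessel's
inequality makes each `ψ n` small on one of them; by the pigeonhole principle a single one works
for infinitely many `n`. -/
open scoped ZMod in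
lemma CompressionStage.exists_infinite_norm_comp_mul_le (hψ : ∀ n, ‖ψ n‖ ≤ 1)
    (hl1 : HasAlmostL1LowerBound ψ) {η : ℝ} (S : CompressionStage ψ η) {s : ℝ} (hs : 0 < s) :
    ∃ m ∈ S.indices, ∃ v, ‖S.map v‖ ≤ 1 ∧ 1 - η ≤ (ψ m (S.map v)).re ∧
      {n ∈ S.indices | ‖ψ n ∘L mul ℂ A (S.map v * star (S.map v))‖ ≤ s ∧
        ‖ψ n ∘L (mul ℂ A).flip (star (S.map v) * S.map v)‖ ≤ s}.Infinite := by
  obtain ⟨N, hN⟩ := exists_nat_gt (2 / s ^ 2)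
  rw [div_lt_iff₀ (by positivity)] at hN
  have : NeZero N := ⟨by rintro rfl; norm_num at hN⟩
  obtain ⟨k, hkK, x, hx, hre⟩ := hl1.exists_one_sub_le_re_apply_invDFT hψ S.infinite_indices N
    (sub_pos.mpr S.error_lt)
  have hTx (j : ZMod N) : ‖S.map (x j)‖ ≤ 1 :=
    (S.map.le_opNorm _).trans (mul_le_one₀ S.norm_map_le_one (norm_nonneg _) (hx j))
  have hmap (i : ZMod N) : S.map (𝓕⁻ x i) = 𝓕⁻ (fun j ↦ S.map (x j)) i :=
    map_invDFT S.map.toLinearMap x i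
  have hrow : ‖∑ i, S.map (𝓕⁻ x i) * star (S.map (𝓕⁻ x i))‖ ≤ 1 := by
    simpa only [hmap] using norm_sum_invDFT_mul_star_le_one hTx
  have hcol : ‖∑ i, star (S.map (𝓕⁻ x i)) * S.map (𝓕⁻ x i)‖ ≤ 1 := by
    simpa only [hmap] using norm_sum_star_invDFT_mul_le_one hTx
  have hnorm (i : ZMod N) : ‖𝓕⁻ x i‖ ≤ 1 :=
    (norm_le_sqrt_norm_sum_mul_star (𝓕⁻ x) i).trans
      (Real.sqrt_le_one.mpr (norm_sum_invDFT_mul_star_le_one hx))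
  obtain ⟨i, hi⟩ := exists_infinite_setOf_mem_and S.infinite_indices fun n _ ↦
    exists_norm_comp_mul_le_and_norm_comp_mul_flip_le (hψ n) hrow hcol hs.le (by rwa [ZMod.card])
  refine ⟨k i, hkK i, 𝓕⁻ x i, ?_, ?_, hi⟩
  · exact (S.map.le_opNorm _).trans (mul_le_one₀ S.norm_map_le_one (norm_nonneg _) (hnorm i))
  · have hdiff := re_apply_le_opNorm_mul_norm (ψ (k i) - ψ (k i) ∘L S.map) (𝓕⁻ x i)
    have hle := hdiff.trans (mul_le_of_le_one_right (norm_nonneg _) (hnorm i))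
    rw [sub_apply, ContinuousLinearMap.comp_apply, Complex.sub_re] at hle
    linarith [hre i, S.norm_sub_le _ (hkK i)]

lemma CompressionStage.exists_next (hψ : ∀ n, ‖ψ n‖ ≤ 1) (hl1 : HasAlmostL1LowerBound ψ)
    {t : ℝ} (ht : 0 < t) (ht1 : t < 1) (S : CompressionStage ψ (t ^ 2 / 10)) :
    ∃ (S' : CompressionStage ψ (t ^ 2 / 10)) (m : ℕ) (a b : A),
      m ∈ S.indices ∧ (∀ n ∈ S'.indices, m < n) ∧
      IsLeftPeak (ψ m) t S.map S'.map a ∧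
      IsLeftPeak (starConj (ψ m)) t (starConj S.map) (starConj S'.map) b := by
  obtain ⟨s, hs⟩ : ∃ s, s = (t ^ 2 / 10 - S.error) / 8 := ⟨_, rfl⟩
  obtain ⟨m, hm, v, hv, hre, hinf⟩ := S.exists_infinite_norm_comp_mul_le hψ hl1 (s := s)
    (by linarith [S.error_lt])
  set u := S.map v with hu
  have hl : 0 ≤ u * star u := mul_star_self_nonneg u
  have hr : 0 ≤ star u * u := star_mul_self_nonneg u
  let S' : CompressionStage ψ (t ^ 2 / 10) :=
    { map := compress (plateau (u * star u)) (plateau (star u * u)) S.map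
      indices := _ \ Set.Iic m
      error := S.error + 4 * s
      norm_map_le_one := (norm_compress_le (plateau_nonneg hl) (norm_plateau_le_one hl)
        (plateau_nonneg hr) (norm_plateau_le_one hr)).trans S.norm_map_le_one
      infinite_indices := hinf.sdiff (Set.finite_Iic m)
      error_lt := by linarith [S.error_lt]
      norm_sub_le := by
        rintro n ⟨⟨hn, hleft, hright⟩, -⟩
        linarith [norm_sub_comp_compress_le (ψ n) (g := plateau (u * star u)) (plateau_nonneg hr)
          (norm_plateau_le_one hr) S.norm_map_le_one, S.norm_sub_le n hn,
          norm_comp_mul_plateau_le (ψ n) hl, norm_comp_mul_flip_plateau_le (ψ n) hr] }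
  have hconj : starConj S.map (star v) = star u := by simp [hu]
  have hb := IsLeftPeak.of_peak (ψ := starConj (ψ m)) (T := starConj S.map) (v := star v)
    (by simpa using hψ m) (by simpa [hconj] using hv) ht ht1 (by simpa [hconj] using hre)
    (plateau (u * star u))
  have hS' : starConj S'.map = compress (plateau (star u * u)) (plateau (u * star u))
      (starConj S.map) := by
    rw [starConj_compress, (plateau_nonneg hl).isSelfAdjoint.star_eq,
      (plateau_nonneg hr).isSelfAdjoint.star_eq]
  rw [hconj, star_star, ← hS'] at hb
  exact ⟨S', m, _, _, hm, fun n hn ↦ not_le.mp hn.2,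
    IsLeftPeak.of_peak (hψ m) hv ht ht1 hre _, hb⟩

lemma exists_isLeftPeak_sequence (hψ : ∀ n, ‖ψ n‖ ≤ 1) (hl1 : HasAlmostL1LowerBound ψ) {t : ℝ}
    (ht : 0 < t) (ht1 : t < 1) :
    ∃ (m : ℕ → ℕ) (T : ℕ → A →L[ℂ] A) (a b : ℕ → A), StrictMono m ∧
      (∀ n, IsLeftPeak (ψ (m n)) t (T n) (T (n + 1)) (a n)) ∧
      ∀ n, IsLeftPeak (starConj (ψ (m n))) t (starConj (T n)) (starConj (T (n + 1))) (b n) := by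
  choose next m a b hm hlt ha hb using CompressionStage.exists_next hψ hl1 ht ht1
  let S₀ : CompressionStage ψ (t ^ 2 / 10) :=
    { map := ContinuousLinearMap.id ℂ A
      indices := Set.univ
      error := 0
      norm_map_le_one := ContinuousLinearMap.norm_id_le
      infinite_indices := Set.infinite_univ
      error_lt := by positivity
      norm_sub_le := fun n _ ↦ by simp }
  let S : ℕ → CompressionStage ψ (t ^ 2 / 10) := fun n ↦ next^[n] S₀
  have hS (n : ℕ) : S (n + 1) = next (S n) := Function.iterate_succ_apply' next n S₀
  refine ⟨fun n ↦ m (S n), fun n ↦ (S n).map, fun n ↦ a (S n), fun n ↦ b (S n),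
    strictMono_nat_of_lt_succ fun n ↦ hlt (S n) _ (hS n ▸ hm _), fun n ↦ ?_, fun n ↦ ?_⟩
  · simpa only [hS] using ha (S n)
  · simpa only [hS] using hb (S n)

end Stages

/-- If a bounded sequence `(φ m)` in the dual of a C*-algebra `A` spans `ℓ¹`
almost isometrically, then for every `ε > 0` there are a subsequence
`(φ (mn n))`, pairwise orthogonal positive normalized elements `(a n)` and
pairwise orthogonal positive normalized elements `(b n)` of `A`, with
`‖φ (mn n) - b_n · φ (mn n) · a_n‖ < ε` for all `n`. -/
theorem almost_isometric_l1_compression_in_cstar_dual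
    {A : Type*} [NonUnitalCStarAlgebra A] [PartialOrder A] [StarOrderedRing A]
    (φ : ℕ → (A →L[ℂ] ℂ))
    (hbdd : ∃ C : ℝ, ∀ m, ‖φ m‖ ≤ C)
    (hφ : ∀ m, φ m ≠ 0)
    (hspan : SpansL1AlmostIsometrically φ)
    (ε : ℝ) (hε : 0 < ε) :
    ∃ mn : ℕ → ℕ, StrictMono mn ∧ ∃ a b : ℕ → A,
      (∀ n, 0 ≤ a n ∧ ‖a n‖ = 1) ∧ (∀ n, 0 ≤ b n ∧ ‖b n‖ = 1) ∧
      (∀ i j, i ≠ j → a i * a j = 0) ∧ (∀ i j, i ≠ j → b i * b j = 0) ∧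
      ∀ n, ‖φ (mn n) - twoSidedFunctional (φ (mn n)) (a n) (b n)‖ < ε := by
  obtain ⟨C, hC⟩ := hbdd
  have hC0 : 0 < C := (norm_pos_iff.mpr (hφ 0)).trans_le (hC 0)
  obtain ⟨t, ht, htlt⟩ := exists_between (lt_min one_pos (by positivity : 0 < ε / (2 * C)))
  obtain ⟨ht1, htε⟩ := lt_min_iff.mp htlt
  have hunit (n : ℕ) : ‖‖φ n‖⁻¹ • φ n‖ = 1 := norm_smul_inv_norm (𝕜 := ℝ) (hφ n)
  obtain ⟨m, T, a, b, hm, ha, hb⟩ :=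
    exists_isLeftPeak_sequence (fun n ↦ (hunit n).le) hspan.hasAlmostL1LowerBound ht ht1
  refine ⟨m, hm, a, b, fun n ↦ ⟨(ha n).nonneg, (ha n).norm_eq_one⟩,
    fun n ↦ ⟨(hb n).nonneg, (hb n).norm_eq_one⟩, fun _ _ ↦ mul_eq_zero_of_isLeftPeak ha,
    fun _ _ ↦ mul_eq_zero_of_isLeftPeak hb, fun n ↦ ?_⟩
  calc ‖φ (m n) - twoSidedFunctional (φ (m n)) (a n) (b n)‖
      = ‖φ (m n)‖ * ‖‖φ (m n)‖⁻¹ • φ (m n)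
          - twoSidedFunctional (‖φ (m n)‖⁻¹ • φ (m n)) (a n) (b n)‖ := by
        rw [← abs_norm (φ (m n)), ← norm_sub_twoSidedFunctional_smul, abs_norm,
          smul_inv_smul₀ (norm_ne_zero_iff.mpr (hφ (m n)))]
    _ ≤ C * (2 * t) := by
        gcongr
        exacts [hC (m n), norm_sub_twoSidedFunctional_le_of_isLeftPeak (ha n) (hb n)]
    _ < ε := by
        rw [lt_div_iff₀ (by positivity)] at htε
        linarith
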